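/- arXiv:1601.03227 — 6 statements merged into one kernel-verified Lean document; each statement's English description precedes it below -/
import Mathlib

section
/- Let K be a finite field and f(X) ∈ K[X] a polynomial of degree n with n distinct roots in an algebraic closure of K. Then f is a cyclic polynomial (with some cyclicity polynomial C(X) ∈ K[X]) if and only if there exists a polynomial C(X) ∈ K[X] which cyclically permutes the roots of f, i.e., for every root α ∈ K̄ of f one has f(C(α)) = 0 and the elements C^{(i)}(α), i = 1, …, n, are pairwise distinct. -/
open Polynomial

/-- `iterComp C m` is the `m`-fold composition `C^{(m)}` of `C` with itself,
with `C^{(0)} = X`. -/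
noncomputable def iterComp {K : Type*} [CommRing K] (C : K[X]) : ℕ → K[X]
  | 0 => X
  | m + 1 => (iterComp C m).comp C

/-- `f` is a cyclic polynomial with cyclicity polynomial `C`:
`f(C(X)) ≡ 0 mod f(X)`, `C^{(n)}(X) - X ≡ 0 mod f(X)` where `n = deg f`, and
`gcd(C^{(m)}(X) - X, f(X)) = 1` for `1 ≤ m < n`. -/
def IsCyclicPolyWith {K : Type*} [Field K] (f C : K[X]) : Prop :=
  f ∣ f.comp C ∧ f ∣ (iterComp C f.natDegree - X) ∧
    ∀ m : ℕ, 1 ≤ m → m < f.natDegree → IsCoprime (iterComp C m - X) f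

lemma aeval_iterComp_aux {K L : Type*} [Field K] [Field L] [Algebra K L] (C : K[X]) (m : ℕ) :
    ∀ α : L, aeval α (iterComp C m) = (fun x : L => aeval x C)^[m] α := by
  induction m with
  | zero => intro α; simp [iterComp]
  | succ k ih =>
    intro α
    rw [iterComp, aeval_comp, ih, Function.iterate_succ_apply]

open scoped Classical in
lemma dvd_of_roots_aux {K : Type*} [Field K] (f g : K[X]) (hf : f ≠ 0)
    (hroots : ((f.map (algebraMap K (AlgebraicClosure K))).roots.toFinset).card = f.natDegree)
    (h : ∀ α : AlgebraicClosure K, aeval α f = 0 → aeval α g = 0) : f ∣ g := by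
  by_cases hg : g = 0
  · simp [hg]
  rw [← map_dvd_map' (algebraMap K (AlgebraicClosure K))]
  have hs := IsAlgClosed.splits (f.map (algebraMap K (AlgebraicClosure K)))
  have hf' : f.map (algebraMap K (AlgebraicClosure K)) ≠ 0 := by
    simpa using hf
  have hg' : g.map (algebraMap K (AlgebraicClosure K)) ≠ 0 := by
    simpa using hg
  have hnd : (f.map (algebraMap K (AlgebraicClosure K))).roots.Nodup := by
    rw [← Multiset.toFinset_card_eq_card_iff_nodup]
    rw [hroots, ← hs.natDegree_eq_card_roots, natDegree_map]
  rw [hs.dvd_iff_roots_le_roots hf' hg', Multiset.le_iff_subset hnd]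
  intro α hα
  rw [mem_roots hf', IsRoot, eval_map_algebraMap] at hα
  rw [mem_roots hg', IsRoot, eval_map_algebraMap]
  exact h α hα

open scoped Classical in
theorem stmt_2 {K : Type*} [Field K] [Fintype K] (f : K[X]) (n : ℕ)
    (hn : f.natDegree = n)
    (hroots : ((f.map (algebraMap K (AlgebraicClosure K))).roots.toFinset).card = n) :
    (∃ C : K[X], IsCyclicPolyWith f C) ↔
      ∃ C : K[X], ∀ α : AlgebraicClosure K, aeval α f = 0 →
        aeval (aeval α C) f = 0 ∧
          ∀ i ∈ Finset.Icc 1 n, ∀ j ∈ Finset.Icc 1 n,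
            aeval α (iterComp C i) = aeval α (iterComp C j) → i = j := by
  subst hn
  refine exists_congr fun C => ?_
  have hit : ∀ (h : ∀ α : AlgebraicClosure K, aeval α f = 0 → aeval (aeval α C) f = 0)
      (m : ℕ) (α : AlgebraicClosure K), aeval α f = 0 →
      aeval (aeval α (iterComp C m)) f = 0 := by
    intro h m
    induction m with
    | zero => intro α hα; simpa [iterComp] using hα
    | succ k ih =>
      intro α hα
      rw [iterComp, aeval_comp]
      exact ih _ (h α hα)
  constructor
  · rintro ⟨h1, h2, h3⟩ α hα
    have h : ∀ α : AlgebraicClosure K, aeval α f = 0 → aeval (aeval α C) f = 0 := by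
      intro α hα
      rw [← aeval_comp]
      exact aeval_eq_zero_of_dvd_aeval_eq_zero h1 hα
    have key : ∀ i j : ℕ, 1 ≤ i → j ≤ f.natDegree → i < j →
        aeval α (iterComp C i) ≠ aeval α (iterComp C j) := by
      intro i j hi hj hij heq
      obtain ⟨u, v, huv⟩ := h3 (j - i) (by omega) (by omega)
      have hb := hit h i α hα
      have hc : aeval (aeval α (iterComp C i)) (iterComp C (j - i)) =
          aeval α (iterComp C i) := by
        conv_rhs => rw [heq]
        simp only [aeval_iterComp_aux]
        rw [← Function.iterate_add_apply, Nat.sub_add_cancel hij.le]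
      have := congrArg (aeval (aeval α (iterComp C i))) huv
      simp [hb, hc] at this
    refine ⟨h α hα, fun i hi j hj heq => ?_⟩
    rw [Finset.mem_Icc] at hi hj
    rcases lt_trichotomy i j with hlt | rfl | hlt
    · exact (key i j hi.1 hj.2 hlt heq).elim
    · rfl
    · exact (key j i hj.1 hi.2 hlt heq.symm).elim
  · intro h
    by_cases hf : f = 0
    · subst hf
      simp [IsCyclicPolyWith, iterComp]
    have hf' : f.map (algebraMap K (AlgebraicClosure K)) ≠ 0 := by
      simpa using hf
    have key : ∀ m : ℕ, 1 ≤ m → m < f.natDegree → ∀ α : AlgebraicClosure K, aeval α f = 0 →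
        aeval α (iterComp C m) ≠ α := by
      intro m hm hmn α hα heq
      have := (h α hα).2 (m + 1) (by simp; omega) 1 (by simp; omega) (by
        simp only [aeval_iterComp_aux] at heq ⊢
        rw [Function.iterate_succ_apply', heq, Function.iterate_one])
      omega
    refine ⟨?_, ?_, ?_⟩
    · refine dvd_of_roots_aux f _ hf hroots fun α hα => ?_
      rw [aeval_comp]
      exact (h α hα).1
    · refine dvd_of_roots_aux f _ hf hroots fun α hα => ?_
      have himg : (Finset.Icc 1 f.natDegree).image (fun i => aeval α (iterComp C i)) =
          (f.map (algebraMap K (AlgebraicClosure K))).roots.toFinset := by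
        apply Finset.eq_of_subset_of_card_le
        · intro x hx
          obtain ⟨i, hi, rfl⟩ := Finset.mem_image.1 hx
          rw [Multiset.mem_toFinset, mem_roots hf', IsRoot, eval_map_algebraMap]
          exact hit (fun a ha => (h a ha).1) i α hα
        · rw [hroots, Finset.card_image_of_injOn]
          · simp
          · intro i hi j hj hij
            exact (h α hα).2 i hi j hj hij
      have hmem : α ∈ (f.map (algebraMap K (AlgebraicClosure K))).roots.toFinset := by
        rw [Multiset.mem_toFinset, mem_roots hf', IsRoot, eval_map_algebraMap]
        exact hα
      rw [← himg] at hmem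
      obtain ⟨i, hi, hia⟩ := Finset.mem_image.1 hmem
      rw [Finset.mem_Icc] at hi
      have : i = f.natDegree := by
        by_contra hne
        exact key i hi.1 (by omega) α hα hia
      subst this
      rw [map_sub, hia]
      simp
    · intro m hm hmn
      rw [isCoprime_iff_aeval_ne_zero_of_isAlgClosed K (AlgebraicClosure K)]
      intro α
      by_cases hα : aeval α f = 0
      · left
        rw [map_sub, aeval_X, sub_ne_zero]
        exact key m hm hmn α hα
      · exact Or.inr hα
end

section
/- Let K be a finite field and f(X) ∈ K[X] a monic polynomial of degree n. Then f is a cyclic polynomial (i.e., there exists a cyclicity polynomial C(X) ∈ K[X] for f) if and only if in the factorisation f = ∏_{k=1}^d h_k into monic irreducible polynomials over K[X], all factors h_k have the same degree and are pairwise distinct. -/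
open Polynomial

theorem aeval_iterComp {K L : Type*} [Field K] [Field L] [Algebra K L] (C : K[X]) (a : L) (m : ℕ) :
    aeval a (iterComp C m) = (fun y => aeval y C)^[m] a := by
  induction m generalizing a with
  | zero => simp [iterComp]
  | succ m ih => rw [iterComp, aeval_comp, ih]; rfl

theorem fwd_core {K L : Type*} [Field K] [Field L] [Algebra K L] (f C : K[X])
    (hf : f ≠ 0) (hC : IsCyclicPolyWith f C) (a : L) (ha : aeval a f = 0) :
    (f.map (algebraMap K L)).roots.Nodup ∧
      ∀ b : L, aeval b f = 0 → ∃ P : K[X], aeval a P = b := by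
  classical
  obtain ⟨h1, h2, h3⟩ := hC
  set T : L → L := fun y => aeval y C with hT
  have hroot : ∀ k, aeval (T^[k] a) f = 0 := by
    intro k
    induction k with
    | zero => simpa using ha
    | succ k ih =>
      rw [Function.iterate_succ_apply']
      obtain ⟨g, hg⟩ := h1
      have := congrArg (aeval (T^[k] a)) hg
      rw [aeval_comp, map_mul, ih, zero_mul] at this
      exact this
  have hne : ∀ i m, 1 ≤ m → m < f.natDegree → T^[i + m] a ≠ T^[i] a := by
    intro i m hm hm' h
    obtain ⟨u, v, huv⟩ := h3 m hm hm'
    have := congrArg (aeval (T^[i] a)) huv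
    rw [map_add, map_mul, map_mul, hroot, map_sub, aeval_iterComp, aeval_X] at this
    rw [add_comm, Function.iterate_add_apply] at h
    change _ * (T^[m] _ - _) + _ = _ at this
    rw [h] at this
    simp at this
  have hinj : Set.InjOn (fun k => T^[k] a) (Finset.range f.natDegree : Set ℕ) := by
    intro i hi j hj hij
    simp only [Finset.coe_range, Set.mem_Iio] at hi hj
    simp only at hij
    rcases lt_trichotomy i j with h | h | h
    · exact absurd (by rw [show i + (j - i) = j by omega]; exact hij.symm)
        (hne i (j - i) (by omega) (by omega))
    · exact h
    · exact absurd (by rw [show j + (i - j) = i by omega]; exact hij)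
        (hne j (i - j) (by omega) (by omega))
  have hf' : f.map (algebraMap K L) ≠ 0 := Polynomial.map_ne_zero hf
  have hsub : (Finset.range f.natDegree).image (fun k => T^[k] a) ⊆
      (f.map (algebraMap K L)).roots.toFinset := by
    intro x hx
    obtain ⟨k, -, rfl⟩ := Finset.mem_image.1 hx
    rw [Multiset.mem_toFinset, mem_roots hf', IsRoot, eval_map_algebraMap]
    exact hroot k
  have hcard := Finset.card_image_of_injOn hinj
  rw [Finset.card_range] at hcard
  have hle : Multiset.card (f.map (algebraMap K L)).roots ≤ f.natDegree := by
    simpa using card_roots' (f.map (algebraMap K L))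
  have hle2 := Multiset.toFinset_card_le (f.map (algebraMap K L)).roots
  have hle3 := Finset.card_le_card hsub
  refine ⟨Multiset.toFinset_card_eq_card_iff_nodup.1 (by omega), ?_⟩
  intro b hb
  have heq := Finset.eq_of_subset_of_card_le hsub (by omega)
  have hbm : b ∈ (f.map (algebraMap K L)).roots.toFinset := by
    rw [Multiset.mem_toFinset, mem_roots hf', IsRoot, eval_map_algebraMap]
    exact hb
  rw [← heq] at hbm
  obtain ⟨k, -, rfl⟩ := Finset.mem_image.1 hbm
  exact ⟨iterComp C k, aeval_iterComp C a k⟩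

theorem fwd {K : Type*} [Field K] (f C : K[X]) (hmonic : f.Monic) (hC : IsCyclicPolyWith f C) :
    (Squarefree f ∧
        ∀ g h : K[X], g.Monic → h.Monic → Irreducible g → Irreducible h →
          g ∣ f → h ∣ f → g.natDegree = h.natDegree) := by
  have hf := hmonic.ne_zero
  constructor
  · by_cases hd : f.natDegree = 0
    · rw [hmonic.natDegree_eq_zero.1 hd]; exact squarefree_one
    obtain ⟨a, ha⟩ := IsAlgClosed.exists_aeval_eq_zero (AlgebraicClosure K) f
      (by rw [degree_eq_natDegree hf]; exact_mod_cast hd)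
    have := (fwd_core f C hf hC a ha).1
    exact ((nodup_aroots_iff_of_splits hf (IsAlgClosed.splits _)).1 this).squarefree
  · have key : ∀ g h : K[X], g.Monic → h.Monic → Irreducible g → Irreducible h →
          g ∣ f → h ∣ f → h.natDegree ≤ g.natDegree := by
      intro g h mg mh ig ih dg dh
      obtain ⟨a, ha⟩ := IsAlgClosed.exists_aeval_eq_zero (AlgebraicClosure K) g
        ig.degree_pos.ne'
      obtain ⟨b, hb⟩ := IsAlgClosed.exists_aeval_eq_zero (AlgebraicClosure K) h
        ih.degree_pos.ne'
      obtain ⟨P, hP⟩ := (fwd_core f C hf hC a (aeval_eq_zero_of_dvd_aeval_eq_zero dg ha)).2 b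
        (aeval_eq_zero_of_dvd_aeval_eq_zero dh hb)
      have eg := minpoly.eq_of_irreducible_of_monic ig ha mg
      have eh := minpoly.eq_of_irreducible_of_monic ih hb mh
      have inta : IsIntegral K a := Algebra.IsIntegral.isIntegral a
      have intb : IsIntegral K b := Algebra.IsIntegral.isIntegral b
      rw [eg, eh, ← IntermediateField.adjoin.finrank inta,
        ← IntermediateField.adjoin.finrank intb]
      have := IntermediateField.adjoin.finiteDimensional inta
      apply IntermediateField.finrank_le_of_le_right
      rw [IntermediateField.adjoin_simple_le_iff, ← hP]
      exact IntermediateField.algebra_adjoin_le_adjoin K _ (aeval_mem_adjoin_singleton K a)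
    intro g h mg mh ig ih dg dh
    exact le_antisymm (key h g mh mg ih ig dh dg) (key g h mg mh ig ih dg dh)

theorem back_core {K L : Type*} [Field K] [Fintype K] [Field L] [Finite L] [Algebra K L]
    (d : ℕ) [NeZero d] (a : Fin d → L)
    (hdeg : ∀ i, (minpoly K (a i)).natDegree = Module.finrank K L)
    (hinj : Function.Injective fun i => minpoly K (a i)) (f : K[X])
    (hfac : f = ∏ i, minpoly K (a i)) : ∃ C : K[X], IsCyclicPolyWith f C := by
  have hd : 0 < d := Nat.pos_of_neZero d
  have hint : ∀ b : L, IsIntegral K b := fun b => IsIntegral.of_finite K b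
  have htop : ∀ i, Algebra.adjoin K {a i} = ⊤ := by
    intro i
    have h1 := (Field.primitive_element_iff_minpoly_natDegree_eq K (a i)).2 (hdeg i)
    rwa [IntermediateField.adjoin_simple_eq_top_iff_of_isAlgebraic (hint _).isAlgebraic] at h1
  set φ := FiniteField.frobeniusAlgHom K L with hφ
  have hord : orderOf φ = Module.finrank K L := FiniteField.orderOf_frobeniusAlgHom K L
  set e := Module.finrank K L with he
  have he0 : 0 < e := Module.finrank_pos
  have hn : f.natDegree = d * e := by
    rw [hfac, natDegree_prod_of_monic _ _ (fun i _ => minpoly.monic (hint _))]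
    simp [hdeg]
  have hcop : ∀ i j, i ≠ j → IsCoprime (minpoly K (a i)) (minpoly K (a j)) := by
    intro i j hij
    refine (minpoly.irreducible (hint _)).coprime_iff_not_dvd.2 fun hdv => hij (hinj ?_)
    exact eq_of_monic_of_associated (minpoly.monic (hint _)) (minpoly.monic (hint _))
      ((minpoly.irreducible (hint _)).associated_of_dvd (minpoly.irreducible (hint _)) hdv)
  have hdvd : ∀ g : K[X], (∀ i, aeval (a i) g = 0) → f ∣ g := by
    intro g hg
    rw [hfac]
    exact Finset.prod_dvd_of_coprime (fun i _ j _ hij => hcop i j hij)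
      (fun i _ => minpoly.dvd K _ (hg i))
  let x : ℕ → L := fun k => (φ ^ (k / d)) (a (Fin.ofNat d k))
  have hx0 : ∀ i : Fin d, x i = a i := by
    intro i
    simp [x, Nat.div_eq_of_lt i.2]
  have hxroot : ∀ k, aeval (x k) f = 0 := by
    intro k
    refine aeval_eq_zero_of_dvd_aeval_eq_zero (p := minpoly K (a (Fin.ofNat d k))) ?_ ?_
    · rw [hfac]; exact Finset.dvd_prod_of_mem _ (Finset.mem_univ _)
    · simp only [x]
      rw [aeval_algHom_apply, minpoly.aeval, map_zero]
  have hxmin : ∀ k, minpoly K (x k) = minpoly K (a (Fin.ofNat d k)) := by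
    intro k
    exact minpoly.algHom_eq _ (φ ^ (k / d)).injective _
  -- the polynomial
  have hex : ∀ i : Fin d, ∃ P : K[X], aeval (a i) P = x (i + 1) := by
    intro i
    have : x (i + 1) ∈ Algebra.adjoin K {a i} := by rw [htop]; trivial
    rw [Algebra.adjoin_singleton_eq_range_aeval] at this
    exact this
  choose P hP using hex
  obtain ⟨C, hC⟩ := Ideal.exists_forall_sub_mem_ideal
    (I := fun i : Fin d => Ideal.span {minpoly K (a i)})
    (fun i j hij => (Ideal.isCoprime_span_singleton_iff _ _).2 (hcop i j hij)) P
  have hCa : ∀ i : Fin d, aeval (a i) C = x (i + 1) := by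
    intro i
    have h1 := aeval_eq_zero_of_dvd_aeval_eq_zero (Ideal.mem_span_singleton.1 (hC i))
      (minpoly.aeval K (a i))
    rw [map_sub, sub_eq_zero] at h1
    rw [h1, hP]
  have hshift : ∀ k j, x (k + d * j) = (φ ^ j) (x k) := by
    intro k j
    simp only [x]
    have h1 : Fin.ofNat d (k + d * j) = Fin.ofNat d k := by
      apply Fin.ext; simp [Fin.ofNat]
    rw [h1, Nat.add_mul_div_left _ _ hd, add_comm, pow_add]
    rfl
  have hCx : ∀ k, aeval (x k) C = x (k + 1) := by
    intro k
    have hk : k = (Fin.ofNat d k : Fin d) + d * (k / d) := by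
      simp [Fin.ofNat, Nat.mod_add_div]
    rw [hk, hshift, aeval_algHom_apply, hx0, hCa, ← hshift]
    congr 1
    omega
  have hit : ∀ m k, aeval (x k) (iterComp C m) = x (k + m) := by
    intro m k
    rw [aeval_iterComp]
    induction m with
    | zero => rfl
    | succ m ih => rw [Function.iterate_succ_apply', ih, hCx]; rfl
  refine ⟨C, ?_, ?_, ?_⟩
  · refine hdvd _ fun i => ?_
    rw [aeval_comp, hCa, hxroot]
  · refine hdvd _ fun i => ?_
    rw [map_sub, ← hx0, hit, hn, hshift, ← hord, pow_orderOf_eq_one]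
    simp
  · intro m hm hm'
    rw [hn] at hm'
    rw [hfac]
    refine IsCoprime.prod_right fun i _ => ?_
    refine ((minpoly.irreducible (hint (a i))).coprime_iff_not_dvd.2 fun hdv => ?_).symm
    have h1 := aeval_eq_zero_of_dvd_aeval_eq_zero hdv (minpoly.aeval K (a i))
    rw [map_sub, aeval_X, sub_eq_zero] at h1
    have h2 : x (i + m) = x i := by rw [← hit, hx0, h1]
    have h3 := congrArg (minpoly K) h2
    rw [hxmin, hxmin] at h3
    have h4 := congrArg Fin.val (hinj h3)
    simp only [Fin.ofNat] at h4
    have h5 : d ∣ m := by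
      have : i.1 + m ≡ i.1 + 0 [MOD d] := h4
      exact (Nat.modEq_zero_iff_dvd).1 (Nat.ModEq.add_left_cancel' _ this)
    obtain ⟨j, rfl⟩ := h5
    rw [hshift, hx0] at h2
    have h6 : φ ^ j = 1 := by
      refine AlgHom.ext_of_adjoin_eq_top (htop i) ?_
      intro y hy
      rw [Set.mem_singleton_iff.1 hy, h2]; rfl
    have h7 := orderOf_dvd_of_pow_eq_one h6
    rw [hord] at h7
    have h8 : j < e := Nat.lt_of_mul_lt_mul_left hm'
    have h9 : j = 0 := Nat.eq_zero_of_dvd_of_lt h7 h8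
    simp [h9] at hm

theorem bwd {K : Type*} [Field K] [Fintype K] (f : K[X]) (hmonic : f.Monic)
    (hsq : Squarefree f)
    (hdeg : ∀ g h : K[X], g.Monic → h.Monic → Irreducible g → Irreducible h →
          g ∣ f → h ∣ f → g.natDegree = h.natDegree) :
    ∃ C : K[X], IsCyclicPolyWith f C := by
  classical
  by_cases hd0 : f.natDegree = 0
  · refine ⟨0, ?_⟩
    have hf1 := hmonic.natDegree_eq_zero.1 hd0
    subst hf1
    exact ⟨one_dvd _, one_dvd _, fun m _ _ => isCoprime_one_right⟩
  have hf := hmonic.ne_zero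
  let s := UniqueFactorizationMonoid.normalizedFactors f
  have hnod : s.Nodup :=
    (UniqueFactorizationMonoid.squarefree_iff_nodup_normalizedFactors hf).1 hsq
  have hprod : s.prod = f := by
    have := leadingCoeff_mul_prod_normalizedFactors f
    rwa [hmonic.leadingCoeff, map_one, one_mul] at this
  have hmem : ∀ p ∈ s, Irreducible p ∧ p.Monic ∧ p ∣ f := fun p hp =>
    (Polynomial.mem_normalizedFactors_iff hf).1 hp
  let S : Finset K[X] := s.toFinset
  have hmemS : ∀ p ∈ S, Irreducible p ∧ p.Monic ∧ p ∣ f := fun p hp =>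
    hmem p (Multiset.mem_toFinset.1 hp)
  have hprodS : ∏ p ∈ S, p = f := by
    rw [← hprod]
    simp [S, Finset.prod, Multiset.dedup_eq_self.2 hnod]
  have hSne : S.Nonempty := by
    rw [Finset.nonempty_iff_ne_empty]
    intro h
    rw [h, Finset.prod_empty] at hprodS
    rw [← hprodS] at hd0
    simp at hd0
  obtain ⟨h0, hh0⟩ := hSne
  obtain ⟨i0, m0, d0⟩ := hmemS h0 hh0
  have : Fact (Irreducible h0) := ⟨i0⟩
  have fin0 : Module.Finite K (AdjoinRoot h0) := m0.finite_adjoinRoot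
  have : Finite (AdjoinRoot h0) := Module.finite_of_finite K
  have hfr : ∀ p : K[X], p ≠ 0 → Module.finrank K (AdjoinRoot p) = p.natDegree := by
    intro p hp
    rw [(AdjoinRoot.powerBasis hp).finrank, AdjoinRoot.powerBasis_dim]
  have hex : ∀ p : S, ∃ b : AdjoinRoot h0, minpoly K b = p := by
    rintro ⟨p, hp⟩
    obtain ⟨ip, mp, dp⟩ := hmemS p hp
    have : Fact (Irreducible p) := ⟨ip⟩
    obtain ⟨ψ⟩ := FiniteField.nonempty_algHom_of_finrank_dvd (F := K) (K := AdjoinRoot p)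
      (L := AdjoinRoot h0) (by
        rw [hfr p ip.ne_zero, hfr h0 i0.ne_zero, hdeg p h0 mp m0 ip i0 dp d0])
    refine ⟨ψ (AdjoinRoot.root p), (minpoly.eq_of_irreducible_of_monic ip ?_ mp).symm⟩
    rw [aeval_algHom_apply, AdjoinRoot.aeval_eq, AdjoinRoot.mk_self, map_zero]
  choose b hb using hex
  have : NeZero S.card := ⟨Finset.card_ne_zero_of_mem hh0⟩
  let E := S.equivFin.symm
  refine back_core (L := AdjoinRoot h0) S.card (fun i => b (E i)) ?_ ?_ f ?_
  · intro i
    obtain ⟨ip, mp, dp⟩ := hmemS _ (E i).2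
    rw [hb, hfr h0 i0.ne_zero]
    exact hdeg _ _ mp m0 ip i0 dp d0
  · intro i j hij
    simp only [hb] at hij
    exact E.injective (Subtype.ext hij)
  · simp only [hb]
    rw [Equiv.prod_comp E (fun p : S => (p : K[X])), Finset.prod_coe_sort S (fun p => p), hprodS]

theorem stmt_3 {K : Type*} [Field K] [Fintype K] (f : K[X]) (n : ℕ)
    (hmonic : f.Monic) (hn : f.natDegree = n) :
    (∃ C : K[X], IsCyclicPolyWith f C) ↔
      (Squarefree f ∧
        ∀ g h : K[X], g.Monic → h.Monic → Irreducible g → Irreducible h →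
          g ∣ f → h ∣ f → g.natDegree = h.natDegree) := by
  constructor
  · rintro ⟨C, hC⟩
    exact fwd f C hmonic hC
  · rintro ⟨h1, h2⟩
    exact bwd f hmonic h1 h2
end

section
/- Let A = K[X]/(f(X)) be a polynomially cyclic algebra over a finite field K with cyclicity polynomial C(X), and let K̃/K be a field extension. Then Ã := A ⊗_K K̃ ≅ K̃[X]/(f(X)) is a polynomially cyclic K̃-algebra with cyclicity polynomial C(X), and there is a canonical group isomorphism Gal(Ã/K̃) ≅ Gal(A/K) (the generator ν̃ of Gal(Ã/K̃) given by C corresponds to the generator ν of Gal(A/K) given by C, i.e. ν̃ = ν ⊗ id). -/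
open Polynomial

theorem iterComp_map_aux {K L : Type*} [CommRing K] [CommRing L] (φ : K →+* L) (C : K[X]) (m : ℕ) :
    iterComp (C.map φ) m = (iterComp C m).map φ := by
  induction m with
  | zero => simp [iterComp]
  | succ m ih => simp [iterComp, ih, Polynomial.map_comp]

open scoped TensorProduct in
theorem exists_e_aux {K Kt : Type*} [Field K] [Field Kt] [Algebra K Kt] (f : K[X]) :
    ∃ e : (Kt ⊗[K] AdjoinRoot f) ≃ₐ[Kt] AdjoinRoot (f.map (algebraMap K Kt)),
      e (1 ⊗ₜ[K] AdjoinRoot.root f) = AdjoinRoot.root (f.map (algebraMap K Kt)) := by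
  have h1 : aeval (AdjoinRoot.root (f.map (algebraMap K Kt))) f = 0 := by
    rw [← aeval_map_algebraMap Kt, AdjoinRoot.aeval_eq, AdjoinRoot.mk_self]
  have h2 : aeval ((1 : Kt) ⊗ₜ[K] AdjoinRoot.root f) (f.map (algebraMap K Kt)) = 0 := by
    rw [aeval_map_algebraMap]
    have := aeval_algHom_apply
      (Algebra.TensorProduct.includeRight : AdjoinRoot f →ₐ[K] Kt ⊗[K] AdjoinRoot f)
      (AdjoinRoot.root f) f
    rw [AdjoinRoot.aeval_eq, AdjoinRoot.mk_self, map_zero] at this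
    simpa using this
  let F : (Kt ⊗[K] AdjoinRoot f) →ₐ[Kt] AdjoinRoot (f.map (algebraMap K Kt)) :=
    Algebra.TensorProduct.lift (Algebra.ofId _ _)
      (AdjoinRoot.liftAlgHom f (Algebra.ofId _ _) (AdjoinRoot.root (f.map (algebraMap K Kt))) h1)
      (fun _ _ => Commute.all _ _)
  let G : AdjoinRoot (f.map (algebraMap K Kt)) →ₐ[Kt] (Kt ⊗[K] AdjoinRoot f) :=
    AdjoinRoot.liftAlgHom _ (Algebra.ofId _ _) ((1 : Kt) ⊗ₜ[K] AdjoinRoot.root f) h2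
  have hF : F (1 ⊗ₜ[K] AdjoinRoot.root f) = AdjoinRoot.root (f.map (algebraMap K Kt)) := by
    simp only [F, Algebra.TensorProduct.lift_tmul, map_one, one_mul]
    exact AdjoinRoot.liftAlgHom_root ..
  have hG : G (AdjoinRoot.root (f.map (algebraMap K Kt))) = 1 ⊗ₜ[K] AdjoinRoot.root f := by
    exact AdjoinRoot.liftAlgHom_root ..
  refine ⟨AlgEquiv.ofAlgHom F G ?_ ?_, hF⟩
  · apply AdjoinRoot.algHom_ext
    simp [hF, hG]
  · apply Algebra.TensorProduct.ext
    · ext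
    · apply AdjoinRoot.algHom_ext
      simp [hF, hG]

open scoped TensorProduct in
theorem stmt_6 {K Kt : Type*} [Field K] [Fintype K] [Field Kt] [Algebra K Kt]
    (f C : K[X]) (n : ℕ) (hn : f.natDegree = n) (hcyc : IsCyclicPolyWith f C)
    (ν : AdjoinRoot f ≃ₐ[K] AdjoinRoot f)
    (hν : ν (AdjoinRoot.root f) = aeval (AdjoinRoot.root f) C)
    (hord : orderOf ν = n) :
    IsCyclicPolyWith (f.map (algebraMap K Kt)) (C.map (algebraMap K Kt)) ∧
    ∃ (e : (Kt ⊗[K] AdjoinRoot f) ≃ₐ[Kt] AdjoinRoot (f.map (algebraMap K Kt)))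
      (νt : AdjoinRoot (f.map (algebraMap K Kt)) ≃ₐ[Kt] AdjoinRoot (f.map (algebraMap K Kt))),
      νt (AdjoinRoot.root (f.map (algebraMap K Kt))) =
          aeval (AdjoinRoot.root (f.map (algebraMap K Kt))) (C.map (algebraMap K Kt)) ∧
      (∀ (k : Kt) (a : AdjoinRoot f), e (k ⊗ₜ[K] ν a) = νt (e (k ⊗ₜ[K] a))) ∧
      ∃ iso : Subgroup.zpowers νt ≃* Subgroup.zpowers ν,
        iso ⟨νt, Subgroup.mem_zpowers νt⟩ = ⟨ν, Subgroup.mem_zpowers ν⟩ := by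
  obtain ⟨e, he⟩ := exists_e_aux (K := K) (Kt := Kt) f
  obtain ⟨h1, h2, h3⟩ := hcyc
  refine ⟨⟨?_, ?_, ?_⟩, e,
    AlgEquiv.autCongr e (Algebra.TensorProduct.congr AlgEquiv.refl ν), ?_, ?_, ?_⟩
  · rw [← Polynomial.map_comp]
    exact Polynomial.map_dvd _ h1
  · rw [natDegree_map, iterComp_map_aux]
    simpa using Polynomial.map_dvd (algebraMap K Kt) h2
  · intro m hm hm'
    rw [natDegree_map] at hm'
    rw [iterComp_map_aux]
    simpa using (h3 m hm hm').map (Polynomial.mapRingHom (algebraMap K Kt))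
  · have hs : e.symm (AdjoinRoot.root (f.map (algebraMap K Kt))) = 1 ⊗ₜ[K] AdjoinRoot.root f := by
      rw [← he, AlgEquiv.symm_apply_apply]
    have := aeval_algHom_apply
      ((e.toAlgHom.restrictScalars K).comp
        (Algebra.TensorProduct.includeRight : AdjoinRoot f →ₐ[K] Kt ⊗[K] AdjoinRoot f))
      (AdjoinRoot.root f) C
    simp [he] at this
    change e (Algebra.TensorProduct.congr AlgEquiv.refl ν (e.symm _)) = _
    simp [hs, hν, this]
  · intro k a
    change _ = e (Algebra.TensorProduct.congr AlgEquiv.refl ν (e.symm _))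
    simp
  · have hinj : Function.Injective (Algebra.TensorProduct.includeRight :
        AdjoinRoot f →ₐ[K] Kt ⊗[K] AdjoinRoot f) :=
      Algebra.TensorProduct.includeRight_injective (algebraMap K Kt).injective
    let φ : (AdjoinRoot f ≃ₐ[K] AdjoinRoot f) →*
        ((Kt ⊗[K] AdjoinRoot f) ≃ₐ[Kt] (Kt ⊗[K] AdjoinRoot f)) :=
      { toFun := fun g => Algebra.TensorProduct.congr AlgEquiv.refl g
        map_one' := Algebra.TensorProduct.congr_refl
        map_mul' := fun g h => by
          apply AlgEquiv.ext
          intro x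
          induction x with
          | zero => simp
          | tmul a b => simp
          | add a b ha hb => rw [map_add, map_add, ha, hb] }
    have hφ : Function.Injective φ := by
      intro g h hgh
      apply AlgEquiv.ext
      intro a
      apply hinj
      have := AlgEquiv.congr_fun hgh (1 ⊗ₜ[K] a)
      simpa [φ] using this
    have hψ : Function.Injective ((AlgEquiv.autCongr e).toMonoidHom.comp φ) :=
      (AlgEquiv.autCongr e).injective.comp hφ
    have ho := orderOf_injective _ hψ ν
    let g1 : Subgroup.zpowers (AlgEquiv.autCongr e (Algebra.TensorProduct.congr AlgEquiv.refl ν)) :=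
      ⟨_, Subgroup.mem_zpowers _⟩
    let g2 : Subgroup.zpowers ν := ⟨ν, Subgroup.mem_zpowers ν⟩
    have hg1 : ∀ x, x ∈ Subgroup.zpowers g1 := by
      rintro ⟨x, k, rfl⟩
      exact ⟨k, rfl⟩
    have hg2 : ∀ x, x ∈ Subgroup.zpowers g2 := by
      rintro ⟨x, k, rfl⟩
      exact ⟨k, rfl⟩
    have hoo : orderOf g1 = orderOf g2 := by
      rw [← Subgroup.orderOf_coe, ← Subgroup.orderOf_coe]
      exact ho
    exact ⟨mulEquivOfOrderOfEq hg1 hg2 hoo, mulEquivOfOrderOfEq_apply_gen hg1 hg2 hoo⟩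
end

section
/- Let A be a polynomially cyclic algebra over a finite field K with Gal(A/K) = ⟨ν⟩ of order n, let ρ_n be a primitive n-th root of unity over K, and let χ: Gal(A/K) → K[ρ_n]^* be a multiplicative character of order r. Then for every α ∈ A, the r-th power of the Lagrange resolvent lies in the base field extension: (χ, α)^r ∈ K[ρ_n] (viewed inside A_{ρ_n}). -/
open Polynomial

theorem aux_iter {K : Type*} [Field K] (f C : K[X])
    (ν : AdjoinRoot f ≃ₐ[K] AdjoinRoot f)
    (hν : ν (AdjoinRoot.root f) = aeval (AdjoinRoot.root f) C) (m : ℕ) :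
    (ν ^ m) (AdjoinRoot.root f) = aeval (AdjoinRoot.root f) (iterComp C m) := by
  induction m with
  | zero => simp [iterComp]
  | succ m ih =>
    rw [iterComp, aeval_comp, ← hν, aeval_algHom_apply, ← ih, pow_succ', AlgEquiv.mul_apply]

theorem aux_unit {K : Type*} [Field K] (f C : K[X]) (hcyc : IsCyclicPolyWith f C)
    (ν : AdjoinRoot f ≃ₐ[K] AdjoinRoot f)
    (hν : ν (AdjoinRoot.root f) = aeval (AdjoinRoot.root f) C) (i j : ℕ) (hij : i < j)
    (hj : j < f.natDegree) :
    IsUnit ((ν ^ j) (AdjoinRoot.root f) - (ν ^ i) (AdjoinRoot.root f)) := by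
  obtain ⟨m, rfl⟩ := Nat.exists_eq_add_of_lt hij
  obtain ⟨u, v, h⟩ := hcyc.2.2 (m + 1) (by omega) (by omega)
  have h2 := congrArg (aeval (AdjoinRoot.root f)) h
  simp only [map_add, map_mul, map_sub, aeval_X, map_one, ← aux_iter f C ν hν] at h2
  have h3 : aeval (AdjoinRoot.root f) f = 0 := by
    rw [AdjoinRoot.aeval_eq, AdjoinRoot.mk_self]
  rw [h3, mul_zero, add_zero] at h2
  have h4 : IsUnit ((ν ^ (m + 1)) (AdjoinRoot.root f) - AdjoinRoot.root f) :=
    IsUnit.of_mul_eq_one_right _ h2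
  have h5 := h4.map (ν ^ i)
  rw [map_sub, ← AlgEquiv.mul_apply, ← pow_add, ← add_assoc] at h5
  exact h5

theorem aux_vand {B : Type*} [CommRing B] {n : ℕ} (v : Fin n → B)
    (hv : ∀ i j, i < j → IsUnit (v j - v i)) (c : Fin n → B)
    (h : ∀ i, ∑ j, c j * v i ^ (j : ℕ) = 0) : c = 0 := by
  have hd : IsUnit (Matrix.vandermonde v).det := by
    rw [Matrix.det_vandermonde]
    refine IsUnit.prod_iff.2 fun i _ => IsUnit.prod_iff.2 fun j hj => hv i j (by simpa using hj)
  have hinj := Matrix.mulVec_injective_of_isUnit ((Matrix.isUnit_iff_isUnit_det _).2 hd)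
  apply hinj
  rw [Matrix.mulVec_zero]
  funext i
  rw [Pi.zero_apply, ← h i]
  simp [Matrix.mulVec, dotProduct, Matrix.vandermonde, mul_comm]

open scoped TensorProduct in
theorem aux_repr {K L : Type*} [Field K] [Field L] [Algebra K L] (f : K[X]) (hf : f ≠ 0)
    (z : L ⊗[K] AdjoinRoot f) :
    ∃ c : Fin f.natDegree → L, z = ∑ j, c j ⊗ₜ[K] (AdjoinRoot.root f ^ (j : ℕ)) := by
  induction z with
  | zero => exact ⟨0, by simp⟩
  | add x y hx hy =>
    obtain ⟨c, rfl⟩ := hx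
    obtain ⟨d, rfl⟩ := hy
    exact ⟨c + d, by simp [TensorProduct.add_tmul, Finset.sum_add_distrib]⟩
  | tmul l a =>
    have h := (AdjoinRoot.powerBasisAux hf).sum_repr a
    refine ⟨fun j => (AdjoinRoot.powerBasisAux hf).repr a j • l, ?_⟩
    conv_lhs => rw [← h]
    rw [TensorProduct.tmul_sum]
    refine Finset.sum_congr rfl fun j _ => ?_
    rw [TensorProduct.tmul_smul, TensorProduct.smul_tmul']
    congr 1
    exact (AdjoinRoot.powerBasis hf).basis_eq_pow j

open scoped TensorProduct in
theorem aux_fixed {K L : Type*} [Field K] [Field L] [Algebra K L]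
    (f C : K[X]) (hf : 0 < f.natDegree) (hcyc : IsCyclicPolyWith f C)
    (ν : AdjoinRoot f ≃ₐ[K] AdjoinRoot f)
    (hν : ν (AdjoinRoot.root f) = aeval (AdjoinRoot.root f) C)
    (z : L ⊗[K] AdjoinRoot f)
    (hz : Algebra.TensorProduct.map (AlgHom.id K L) (ν : AdjoinRoot f →ₐ[K] AdjoinRoot f) z = z) :
    ∃ l : L, z = l ⊗ₜ[K] (1 : AdjoinRoot f) := by
  have hf0 : f ≠ 0 := by rintro rfl; simp at hf
  obtain ⟨c, hc⟩ := aux_repr f hf0 z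
  have hi : ∀ i : ℕ, z = ∑ j, c j ⊗ₜ[K] (((ν ^ i) (AdjoinRoot.root f)) ^ (j : ℕ)) := by
    intro i
    induction i with
    | zero => simpa using hc
    | succ i ih =>
      have := hz
      rw [ih, map_sum] at this
      rw [ih, ← this]
      refine Finset.sum_congr rfl fun j _ => ?_
      simp [pow_succ', AlgEquiv.mul_apply]
  let j0 : Fin f.natDegree := ⟨0, hf⟩
  have key := aux_vand
    (fun i : Fin f.natDegree => (1 : L) ⊗ₜ[K] ((ν ^ (i : ℕ)) (AdjoinRoot.root f)))
    (fun i j hij => by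
      have := (aux_unit f C hcyc ν hν i j hij j.2).map
        (Algebra.TensorProduct.includeRight : AdjoinRoot f →ₐ[K] L ⊗[K] AdjoinRoot f)
      simpa [TensorProduct.tmul_sub] using this)
    (fun j => c j ⊗ₜ[K] (1 : AdjoinRoot f) - if j = j0 then z else 0)
    (fun i => by
      simp only [sub_mul, Finset.sum_sub_distrib, ite_mul, zero_mul, Finset.sum_ite_eq',
        Finset.mem_univ, if_true, Algebra.TensorProduct.tmul_pow, one_pow,
        Algebra.TensorProduct.tmul_mul_tmul, mul_one, one_mul]
      rw [← hi i]
      simp [j0, ← Algebra.TensorProduct.one_def])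
  have h0 := congrFun key j0
  simp only [if_true, Pi.zero_apply] at h0
  exact ⟨c j0, (sub_eq_zero.1 h0).symm⟩

open scoped TensorProduct in
theorem stmt_9 {K L : Type*} [Field K] [Fintype K] [Field L] [Algebra K L]
    (f C : K[X]) (n : ℕ) (hn : f.natDegree = n) (hcyc : IsCyclicPolyWith f C)
    (ν : AdjoinRoot f ≃ₐ[K] AdjoinRoot f)
    (hν : ν (AdjoinRoot.root f) = aeval (AdjoinRoot.root f) C)
    (hord : orderOf ν = n)
    (ρ : L) (hρ : IsPrimitiveRoot ρ n) (hL : Algebra.adjoin K {ρ} = ⊤)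
    (χ : ↥(Subgroup.zpowers ν) →* Lˣ) (r : ℕ) (hr : orderOf χ = r)
    (a : AdjoinRoot f) :
    ∃ l : L,
      (∑ i ∈ Finset.range n,
        (((χ ⟨ν, Subgroup.mem_zpowers ν⟩ : Lˣ) : L) ^ (i + 1)) ⊗ₜ[K] ((ν ^ (i + 1)) a)) ^ r
      = l ⊗ₜ[K] (1 : AdjoinRoot f) := by
  rcases Nat.eq_zero_or_pos n with h0 | hpos
  · refine ⟨0 ^ r, ?_⟩
    rw [h0, Finset.range_zero, Finset.sum_empty]
    rcases Nat.eq_zero_or_pos r with hr0 | hr0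
    · rw [hr0, pow_zero, pow_zero, Algebra.TensorProduct.one_def]
    · rw [zero_pow hr0.ne', zero_pow hr0.ne', TensorProduct.zero_tmul]
  set g : Subgroup.zpowers ν := ⟨ν, Subgroup.mem_zpowers ν⟩ with hg
  have hgn : g ^ n = 1 := by
    apply Subtype.ext
    simp [hg, ← hord, pow_orderOf_eq_one]
  have hνn : ν ^ n = 1 := by rw [← hord, pow_orderOf_eq_one]
  set w : L := ((χ g : Lˣ) : L) with hw
  have hwn : w ^ n = 1 := by
    rw [hw, ← Units.val_pow_eq_pow_val, ← map_pow, hgn, map_one, Units.val_one]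
  have hwr : w ^ r = 1 := by
    have h1 : χ ^ r = 1 := by rw [← hr, pow_orderOf_eq_one]
    have h2 := DFunLike.congr_fun h1 g
    rw [hw, ← Units.val_pow_eq_pow_val, ← MonoidHom.pow_apply, h2, MonoidHom.one_apply,
      Units.val_one]
  apply aux_fixed f C (hn ▸ hpos) hcyc ν hν
  rw [map_pow]
  set S := ∑ i ∈ Finset.range n, (w ^ (i + 1)) ⊗ₜ[K] ((ν ^ (i + 1)) a) with hS
  set φ := Algebra.TensorProduct.map (AlgHom.id K L) (ν : AdjoinRoot f →ₐ[K] AdjoinRoot f) with hφ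
  have hsh : (w ⊗ₜ[K] (1 : AdjoinRoot f)) * φ S = S := by
    have e : ∀ i, (w ⊗ₜ[K] (1 : AdjoinRoot f)) * φ ((w ^ (i + 1)) ⊗ₜ[K] ((ν ^ (i + 1)) a))
        = (w ^ (i + 1 + 1)) ⊗ₜ[K] ((ν ^ (i + 1 + 1)) a) := by
      intro i
      rw [hφ, Algebra.TensorProduct.map_tmul, Algebra.TensorProduct.tmul_mul_tmul, one_mul,
        pow_succ' ν (i + 1), pow_succ' w (i + 1)]
      rfl
    rw [hS, map_sum, Finset.mul_sum, Finset.sum_congr rfl fun i _ => e i]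
    have h1 := Finset.sum_range_succ (fun i => (w ^ (i + 1)) ⊗ₜ[K] ((ν ^ (i + 1)) a)) n
    have h2 := Finset.sum_range_succ' (fun i => (w ^ (i + 1)) ⊗ₜ[K] ((ν ^ (i + 1)) a)) n
    rw [h1] at h2
    simp only [zero_add, pow_succ w n, pow_succ ν n, hwn, hνn, one_mul, pow_one] at h2
    exact (add_right_cancel h2).symm
  have h3 := congrArg (· ^ r) hsh
  simp only [mul_pow, Algebra.TensorProduct.tmul_pow, hwr, one_pow] at h3
  rw [← Algebra.TensorProduct.one_def, one_mul] at h3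
  exact h3
end

section
/- Let A be a polynomially cyclic algebra over the finite field K = F_q with Gal(A/K) = ⟨ν⟩ of order n, let ρ_n be a primitive n-th root of unity over K, let χ: Gal(A/K) → K[ρ_n]^* be a multiplicative character, and suppose the q-power Frobenius map x ↦ x^q on A is an element φ_q of Gal(A/K). Then for every α ∈ A, the Lagrange resolvent satisfies (χ, α)^q = χ(φ_q)^{-q} · (χ^q, α), where the q-th power on the left is taken in A_{ρ_n} with the q-power map also applied to K[ρ_n], and χ^q denotes the character σ ↦ χ(σ)^q. -/
open Polynomial

theorem sum_shift_aux {M : Type*} [AddCommGroup M] (n : ℕ) (h : ℕ → M)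
    (hp : ∀ j, h (j + n) = h j) (k : ℕ) :
    ∑ i ∈ Finset.range n, h (i + 1 + k) = ∑ i ∈ Finset.range n, h (i + 1) := by
  induction k with
  | zero => simp
  | succ k ih =>
    rw [← ih]
    have h1 := Finset.sum_range_succ (fun i => h (i + 1 + k)) n
    have h2 := Finset.sum_range_succ' (fun i => h (i + 1 + k)) n
    have h3 : h (n + 1 + k) = h (0 + 1 + k) := by
      rw [← hp (0 + 1 + k)]; congr 1; omega
    rw [h1] at h2
    simp only [h3] at h2
    have h4 := add_right_cancel h2
    rw [h4]
    refine Finset.sum_congr rfl fun i _ => ?_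
    congr 1; omega

open scoped TensorProduct in
theorem stmt_11 {K L : Type*} [Field K] [Fintype K] [Field L] [Algebra K L]
    (f C : K[X]) (n : ℕ) (hn : f.natDegree = n) (hcyc : IsCyclicPolyWith f C)
    (ν : AdjoinRoot f ≃ₐ[K] AdjoinRoot f)
    (hν : ν (AdjoinRoot.root f) = aeval (AdjoinRoot.root f) C)
    (hord : orderOf ν = n)
    (ρ : L) (hρ : IsPrimitiveRoot ρ n) (hL : Algebra.adjoin K {ρ} = ⊤)
    (χ : ↥(Subgroup.zpowers ν) →* Lˣ)
    (φq : ↥(Subgroup.zpowers ν))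
    (hφq : ∀ x : AdjoinRoot f,
      (φq : AdjoinRoot f ≃ₐ[K] AdjoinRoot f) x = x ^ Fintype.card K)
    (a : AdjoinRoot f) :
    (∑ i ∈ Finset.range n,
        (((χ ⟨ν, Subgroup.mem_zpowers ν⟩ : Lˣ) : L) ^ (i + 1)) ⊗ₜ[K] ((ν ^ (i + 1)) a))
      ^ Fintype.card K
    = (((((χ φq)⁻¹ : Lˣ) : L) ^ Fintype.card K) ⊗ₜ[K] (1 : AdjoinRoot f)) *
      ∑ i ∈ Finset.range n,
        ((((χ ^ Fintype.card K) ⟨ν, Subgroup.mem_zpowers ν⟩ : Lˣ) : L) ^ (i + 1)) ⊗ₜ[K]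
          ((ν ^ (i + 1)) a) := by
  classical
  rcases Nat.eq_zero_or_pos n with h0 | hpos
  · subst h0
    simp [Fintype.card_ne_zero]
  set g : ↥(Subgroup.zpowers ν) := ⟨ν, Subgroup.mem_zpowers ν⟩ with hg
  have hfin : IsOfFinOrder ν := by
    rw [← orderOf_pos_iff, hord]; exact hpos
  obtain ⟨k, hk⟩ : ∃ k : ℕ, ν ^ k = (φq : AdjoinRoot f ≃ₐ[K] AdjoinRoot f) := by
    have := hfin.mem_powers_iff_mem_zpowers.2 φq.2
    exact Submonoid.mem_powers_iff _ _ |>.1 this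
  have hgk : φq = g ^ k := by
    apply Subtype.ext
    rw [← hk]; rfl
  have hνn : ν ^ n = 1 := by rw [← hord]; exact pow_orderOf_eq_one ν
  have hgn : g ^ n = 1 := by
    apply Subtype.ext
    exact hνn
  have hχn : χ g ^ n = 1 := by rw [← map_pow, hgn, map_one]
  set q := Fintype.card K with hq
  have hshift := sum_shift_aux n
    (fun j => (((χ g ^ q : Lˣ) : L) ^ j) ⊗ₜ[K] ((ν ^ j) a))
    (by
      intro j
      have : ((χ g ^ q : Lˣ) : L) ^ n = 1 := by
        rw [← Units.val_pow_eq_pow_val, ← pow_mul, mul_comm, pow_mul, hχn]; simp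
      simp only [pow_add, this, hνn, mul_one]) k
  have hR : ∀ i, ((((χ ^ q) g : Lˣ) : L) ^ (i + 1)) = ((χ g ^ q : Lˣ) : L) ^ (i + 1) :=
    fun i => rfl
  simp only [hR]
  rw [← hshift, Finset.mul_sum]
  have hF := map_sum (FiniteField.frobeniusAlgHom K (L ⊗[K] AdjoinRoot f))
    (fun i => (((χ g : Lˣ) : L) ^ (i + 1)) ⊗ₜ[K] ((ν ^ (i + 1)) a)) (Finset.range n)
  simp only [FiniteField.coe_frobeniusAlgHom] at hF
  rw [hF]
  refine Finset.sum_congr rfl fun i _ => ?_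
  rw [Algebra.TensorProduct.tmul_pow, Algebra.TensorProduct.tmul_mul_tmul, one_mul, ← hφq, ← hk]
  congr 1
  · rw [hgk, map_pow]
    simp only [← Units.val_pow_eq_pow_val, ← Units.val_mul]
    congr 1
    rw [inv_pow, eq_inv_mul_iff_mul_eq]
    simp only [← pow_mul, ← pow_add]
    congr 1; ring
  · rw [add_comm (i + 1) k, pow_add ν k]; rfl
end

section
/- Let K be a finite field, n a positive integer, and let B, C be commutative K-algebras equipped with K-algebra automorphisms ν of B and σ of C, each of order n. Let θ ∈ B, ζ ∈ C, and suppose α: B → C is a K-algebra isomorphism with α ∘ ν = σ ∘ α and α(θ) = Σ_{i=1}^{n} b_i σ^i(ζ) with b_i ∈ K. Let q divide n, let ρ_q be a primitive q-th root of unity over K, and define θ^{(q)} = Σ_{j=1}^{n/q} ν^{jq}(θ), ζ^{(q)} = Σ_{j=1}^{n/q} σ^{jq}(ζ), b_i^{(q)} = Σ_{k=1}^{n/q} b_{kq+i} for 1 ≤ i ≤ q (indices of b taken modulo n), τ_e(χ_q) = Σ_{a=1}^{q} ρ_q^a ν^a(θ^{(q)}), τ(χ_q) = Σ_{j=1}^{q}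 ρ_q^j σ^j(ζ^{(q)}), and β(χ_q) = Σ_{i=1}^{q} ρ_q^{-i} b_i^{(q)}. Then, extending α to B ⊗_K K[ρ_q] → C ⊗_K K[ρ_q] by the identity on ρ_q, one has α(τ_e(χ_q)) = β(χ_q) · τ(χ_q). -/
theorem aux_shift {M : Type*} [AddCommMonoid M] (f : ℕ → M) (n : ℕ)
    (hf : ∀ i, f (i + n) = f i) (c : ℕ) :
    ∑ m ∈ Finset.range n, f (m + c) = ∑ m ∈ Finset.range n, f m := by
  induction c with
  | zero => simp
  | succ c ih =>
    rw [← ih]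
    cases n with
    | zero => simp
    | succ k =>
      rw [Finset.sum_range_succ, Finset.sum_range_succ' (fun m => f (m + c))]
      congr 1
      · exact Finset.sum_congr rfl fun m _ => by congr 1; ring
      · rw [show k + (c + 1) = (0 + c) + (k + 1) by ring, hf]

theorem aux_block {M : Type*} [AddCommMonoid M] (f : ℕ → M) (q d : ℕ) :
    ∑ a ∈ Finset.range q, ∑ j ∈ Finset.range d, f (j * q + a)
      = ∑ m ∈ Finset.range (d * q), f m := by
  induction d with
  | zero => simp
  | succ d ih =>
    simp_rw [Finset.sum_range_succ, Finset.sum_add_distrib]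
    rw [ih, Nat.succ_mul, Finset.sum_range_add]

theorem aux_full {M : Type*} [AddCommMonoid M] (f : ℕ → M) (n q : ℕ) (hq : q ∣ n)
    (hf : ∀ i, f (i + n) = f i) :
    ∑ a ∈ Finset.range q, ∑ j ∈ Finset.range (n / q), f ((j + 1) * q + (a + 1))
      = ∑ m ∈ Finset.range n, f m := by
  rw [← aux_shift f n hf (q + 1)]
  have h := aux_block (fun m => f (m + (q + 1))) q (n / q)
  rw [Nat.div_mul_cancel hq] at h
  rw [← h]
  exact Finset.sum_congr rfl fun a _ => Finset.sum_congr rfl fun j _ => by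
    congr 1; ring

open scoped TensorProduct in
theorem aux_T {K C L : Type*} [Field K] [CommRing C]
    [Algebra K C] [Field L] [Algebra K L] (n : ℕ) (σ : C ≃ₐ[K] C) (hσ : σ ^ n = 1)
    (q : ℕ) (hq : q ∣ n) (ρ : L) (hρ : ρ ^ q = 1) (x : C) :
    (∑ j ∈ Finset.range q,
          (ρ ^ (j + 1)) ⊗ₜ[K]
            ((σ ^ (j + 1)) (∑ i ∈ Finset.range (n / q), ((σ ^ ((i + 1) * q)) x))))
     = ∑ m ∈ Finset.range n, (ρ ^ m) ⊗ₜ[K] ((σ ^ m) x) := by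
  have hρn : ρ ^ n = 1 := by
    obtain ⟨d, rfl⟩ := hq
    rw [pow_mul, hρ, one_pow]
  rw [← aux_full (fun m => (ρ ^ m) ⊗ₜ[K] ((σ ^ m) x)) n q hq
    (fun i => by simp only [pow_add, hρn, hσ, mul_one])]
  refine Finset.sum_congr rfl fun a _ => ?_
  rw [map_sum, TensorProduct.tmul_sum]
  refine Finset.sum_congr rfl fun j _ => ?_
  have h1 : ρ ^ ((j + 1) * q + (a + 1)) = ρ ^ (a + 1) := by
    rw [pow_add, mul_comm (j + 1) q, pow_mul, hρ, one_pow, one_mul]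
  rw [h1, ← AlgEquiv.mul_apply, ← pow_add, add_comm (a + 1)]

open scoped TensorProduct in
theorem stmt_18 {K B C L : Type*} [Field K] [Fintype K] [CommRing B] [CommRing C]
    [Algebra K B] [Algebra K C] [Field L] [Algebra K L]
    (n : ℕ) (hn : 0 < n)
    (ν : B ≃ₐ[K] B) (σ : C ≃ₐ[K] C) (hν : orderOf ν = n) (hσ : orderOf σ = n)
    (θ : B) (ζ : C) (α : B ≃ₐ[K] C) (hint : ∀ x : B, α (ν x) = σ (α x))
    (b : ℕ → K) (hper : ∀ i, b (i + n) = b i)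
    (hθ : α θ = ∑ i ∈ Finset.range n, b (i + 1) • ((σ ^ (i + 1)) ζ))
    (q : ℕ) (hq : q ∣ n) (hq0 : 0 < q)
    (ρ : L) (hρ : IsPrimitiveRoot ρ q) :
    Algebra.TensorProduct.map (AlgHom.id K L) α.toAlgHom
      (∑ a ∈ Finset.range q,
        (ρ ^ (a + 1)) ⊗ₜ[K]
          ((ν ^ (a + 1)) (∑ j ∈ Finset.range (n / q), ((ν ^ ((j + 1) * q)) θ))))
    = ((∑ i ∈ Finset.range q,
          (∑ k ∈ Finset.range (n / q), b ((k + 1) * q + (i + 1))) •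
            (ρ ^ (-(i + 1 : ℤ)))) ⊗ₜ[K] (1 : C))
      * (∑ j ∈ Finset.range q,
          (ρ ^ (j + 1)) ⊗ₜ[K]
            ((σ ^ (j + 1)) (∑ i ∈ Finset.range (n / q), ((σ ^ ((i + 1) * q)) ζ)))) := by
  have hσn : σ ^ n = 1 := hσ ▸ pow_orderOf_eq_one σ
  have hρq : ρ ^ q = 1 := hρ.pow_eq_one
  have hρ0 : ρ ≠ 0 := hρ.ne_zero hq0.ne'
  have hρn : ρ ^ n = 1 := by
    obtain ⟨d, rfl⟩ := hq
    rw [pow_mul, hρq, one_pow]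
  have hpow : ∀ (m : ℕ) (x : B), α ((ν ^ m) x) = (σ ^ m) (α x) := by
    intro m
    induction m with
    | zero => intro x; simp
    | succ m ih => intro x; rw [pow_succ, pow_succ, AlgEquiv.mul_apply, AlgEquiv.mul_apply, ih, hint]
  have hL : ∀ y : B, α.toAlgHom y = α y := fun y => rfl
  rw [map_sum]
  simp only [Algebra.TensorProduct.map_tmul, AlgHom.id_apply, hL, hpow, map_sum α]
  rw [aux_T n σ hσn q hq ρ hρq, aux_T n σ hσn q hq ρ hρq]
  have hb : (∑ i ∈ Finset.range q,
          (∑ k ∈ Finset.range (n / q), b ((k + 1) * q + (i + 1))) •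
            (ρ ^ (-(i + 1 : ℤ)))) = ∑ m ∈ Finset.range n, b (m + 1) • (ρ ^ (m + 1))⁻¹ := by
    have hg : ∀ i, b (i + n) • (ρ ^ (i + n))⁻¹ = b i • (ρ ^ i)⁻¹ := by
      intro i; rw [hper, pow_add, hρn, mul_one]
    rw [aux_shift (fun m => b m • (ρ ^ m)⁻¹) n hg 1,
      ← aux_full (fun m => b m • (ρ ^ m)⁻¹) n q hq hg]
    refine Finset.sum_congr rfl fun i _ => ?_
    rw [Finset.sum_smul]
    refine Finset.sum_congr rfl fun k _ => ?_
    have h1 : ρ ^ ((k + 1) * q + (i + 1)) = ρ ^ (i + 1) := by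
      rw [pow_add, mul_comm (k + 1) q, pow_mul, hρq, one_pow, one_mul]
    rw [h1, zpow_neg]
    congr 2
    exact_mod_cast zpow_natCast ρ (i + 1)
  rw [hb, hθ, TensorProduct.sum_tmul, Finset.sum_mul]
  simp only [map_sum, TensorProduct.tmul_sum]
  rw [Finset.sum_comm]
  refine Finset.sum_congr rfl fun i _ => ?_
  rw [← aux_shift (fun m => (ρ ^ m) ⊗ₜ[K] ((σ ^ m) ζ)) n
    (fun i => by simp only [pow_add, hρn, hσn, mul_one]) (i + 1), Finset.mul_sum]
  refine Finset.sum_congr rfl fun m _ => ?_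
  rw [Algebra.TensorProduct.tmul_mul_tmul, one_mul, map_smul, ← AlgEquiv.mul_apply, ← pow_add,
    TensorProduct.tmul_smul, TensorProduct.smul_tmul', smul_mul_assoc, pow_add ρ m,
    mul_comm (ρ ^ m), inv_mul_cancel_left₀ (pow_ne_zero _ hρ0)]
end
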